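/- Let p = q ≥ 4 and n = p + q. Every tree T ∈ 𝒯_n^{p,q} that is isomorphic to none of B_{p,q}^{0,0}, B_{p,q}^{0,1}, B_{p,q}^{2,0} satisfies T ≺_s B_{p,q}^{2,0}; that is, for p = q ≥ 4 the tree B_{p,q}^{2,0} is the unique third last tree in the S-order among 𝒯_n^{p,q}. -/

import Mathlib

open SimpleGraph

open scoped Classical in
/-- The adjacency matrix of a simple graph, with real entries. -/
noncomputable def adjMat {V : Type*} [Fintype V] (G : SimpleGraph V) : Matrix V V ℝ :=
  Matrix.of fun a b => if G.Adj a b then 1 else 0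

/-- The `k`-th spectral moment `S_k(G) = tr(A(G)^k)`. -/
noncomputable def spectralMoment {V : Type*} [Fintype V] [DecidableEq V]
    (G : SimpleGraph V) (k : ℕ) : ℝ :=
  Matrix.trace (adjMat G ^ k)

/-- `SLt G₁ G₂` means `G₁ ≺_s G₂`: for some `k` with `1 ≤ k ≤ n - 1`,
`S_i(G₁) = S_i(G₂)` for all `i < k` and `S_k(G₁) < S_k(G₂)`. -/
def SLt {V : Type*} [Fintype V] [DecidableEq V] (G₁ G₂ : SimpleGraph V) : Prop :=
  ∃ k : ℕ, 1 ≤ k ∧ k ≤ Fintype.card V - 1 ∧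
    (∀ i < k, spectralMoment G₁ i = spectralMoment G₂ i) ∧
    spectralMoment G₁ k < spectralMoment G₂ k

/-- The tree `B_{p,q}^{k,l}` on `p + q` vertices: vertex `0 = u` is adjacent to `1 = v`
and to the `q - 1` vertices `2, …, q`; the distinguished neighbor `2` of `u` carries the
`k` pendant leaves `q+1, …, q+k`; the `l` neighbors `3, …, l+2` of `u` carry one pendant
leaf each (`q+k+j` is attached to `j+2` for `1 ≤ j ≤ l`); and `v` carries the
`p - k - l - 1` pendant leaves `q+k+l+1, …, p+q-1`. -/
def BTree (p q k l : ℕ) : SimpleGraph (Fin (p + q)) :=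
  SimpleGraph.fromRel (fun a b =>
    (a.val = 0 ∧ b.val = 1) ∨
    (a.val = 0 ∧ 2 ≤ b.val ∧ b.val ≤ q) ∨
    (a.val = 2 ∧ q + 1 ≤ b.val ∧ b.val ≤ q + k) ∨
    (q + k + 1 ≤ b.val ∧ b.val ≤ q + k + l ∧ a.val = b.val - (q + k) + 2) ∨
    (a.val = 1 ∧ q + k + l + 1 ≤ b.val))

/-- The tree `D_{p,q}^{k,l}` on `p + q` vertices: vertex `1 = v` is adjacent to `0 = u`
and to the `p - 1` vertices `2, …, p`; the distinguished neighbor `2` of `v` carries the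
`k` pendant leaves `p+1, …, p+k`; the `l` neighbors `3, …, l+2` of `v` carry one pendant
leaf each; and `u` carries the `q - k - l - 1` pendant leaves `p+k+l+1, …, p+q-1`. -/
def DTree (p q k l : ℕ) : SimpleGraph (Fin (p + q)) :=
  SimpleGraph.fromRel (fun a b =>
    (a.val = 0 ∧ b.val = 1) ∨
    (a.val = 1 ∧ 2 ≤ b.val ∧ b.val ≤ p) ∨
    (a.val = 2 ∧ p + 1 ≤ b.val ∧ b.val ≤ p + k) ∨
    (p + k + 1 ≤ b.val ∧ b.val ≤ p + k + l ∧ a.val = b.val - (p + k) + 2) ∨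
    (a.val = 0 ∧ p + k + l + 1 ≤ b.val))

/-- `T ∈ 𝒯_{p+q}^{p,q}`: `T` is a tree on `p + q` vertices with a `(p,q)`-bipartition. -/
def TreeBip (p q : ℕ) (G : SimpleGraph (Fin (p + q))) : Prop :=
  G.IsTree ∧ ∃ A : Finset (Fin (p + q)), A.card = p ∧
    ∀ ⦃x y : Fin (p + q)⦄, G.Adj x y → (x ∈ A ↔ y ∉ A)

/-!
For trees on `n` vertices the moments `S₀, …, S₃` depend only on `n`, and
`S₄ = 2 ∑ (deg v - 1) ^ 2 + 4 n - 6`, because two distinct vertices have at most one common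
neighbour. On each colour class the excesses `deg v - 1` add up to `p - 1`, so the sum of their
squares cannot reach the value `(p - 1) ^ 2 + (p - 3) ^ 2 + 2 ^ 2` of `B_{p,p}^{2,0}` unless some
vertex is a hub, i.e. adjacent to the whole opposite class, and the excesses on that class are
`p - 1 - k, k, 0, …, 0` with `k ≤ 2`. A tree with a hub is determined by the multiset of these
excesses, and `k = 0, 1, 2` give `B_{p,p}^{0,0}`, `B_{p,p}^{0,1}` and `B_{p,p}^{2,0}`.
-/

section SumOfSquares

open Finset

variable {ι : Type*} {s : Finset ι} {e : ι → ℕ}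

lemma sum_sq_le_mul_sum {M : ℕ} (hM : ∀ x ∈ s, e x ≤ M) :
    ∑ x ∈ s, e x ^ 2 ≤ M * ∑ x ∈ s, e x := by
  rw [mul_sum]
  refine sum_le_sum fun x hx => ?_
  rw [sq]
  exact Nat.mul_le_mul_right _ (hM x hx)

lemma sum_sq_le_sq_add_sq_of_le {M r : ℕ} (hM : ∀ x ∈ s, e x ≤ M) (hr : r ≤ M)
    (hsum : ∑ x ∈ s, e x = M + r) : ∑ x ∈ s, e x ^ 2 ≤ M ^ 2 + r ^ 2 := by
  classical
  by_cases hlt : ∀ x ∈ s, e x ≤ r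
  · have h := sum_sq_le_mul_sum hlt
    rw [hsum] at h
    nlinarith
  · push Not at hlt
    obtain ⟨v, hv, hrv⟩ := hlt
    have hrest := sum_sq_le_sq_sum_of_nonneg (s := s.erase v) fun x _ => Nat.zero_le (e x)
    have hvM := hM v hv
    rw [← add_sum_erase s _ hv] at hsum ⊢
    nlinarith

lemma map_val_eq_of_le_of_le {a b : ℕ} {v w : ι} (hv : v ∈ s) (hw : w ∈ s) (hvw : v ≠ w)
    (ha : a ≤ e v) (hb : b ≤ e w) (hsum : ∑ x ∈ s, e x ≤ a + b) :
    s.val.map e = a ::ₘ b ::ₘ Multiset.replicate (#s - 2) 0 := by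
  classical
  have hw' : w ∈ s.erase v := mem_erase.2 ⟨hvw.symm, hw⟩
  rw [← add_sum_erase s e hv, ← add_sum_erase _ e hw'] at hsum
  have hzero : ∀ x ∈ (s.erase v).erase w, e x = 0 := sum_eq_zero_iff.1 (by omega)
  have hcard : #((s.erase v).erase w) = #s - 2 := by
    rw [card_erase_of_mem hw', card_erase_of_mem hv, Nat.sub_sub]
  obtain rfl : e v = a := by omega
  obtain rfl : e w = b := by omega
  rw [← hcard, card_def, ← Multiset.map_const', ← Multiset.map_congr rfl hzero,
    ← Multiset.map_cons, ← insert_val_of_notMem (notMem_erase w _), insert_erase hw',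
    ← Multiset.map_cons, ← insert_val_of_notMem (notMem_erase v _), insert_erase hv]

lemma sum_sq_lt_of_sum_eq_add_three {t : ℕ} (hle : ∀ x ∈ s, e x ≤ t)
    (hsum : ∑ x ∈ s, e x = t + 3) : ∑ x ∈ s, e x ^ 2 < (t + 1) ^ 2 + 4 := by
  rcases Nat.lt_or_ge t 3 with ht | ht
  · have := sum_sq_le_mul_sum hle
    rw [hsum] at this
    nlinarith
  · have := sum_sq_le_sq_add_sq_of_le hle ht hsum
    nlinarith

lemma exists_map_val_eq_or_sum_sq_lt {m : ℕ} (hm : 3 ≤ m) (hs : 1 < #s)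
    (hsum : ∑ x ∈ s, e x = m) :
    (∃ k ≤ 2, s.val.map e = (m - k) ::ₘ k ::ₘ Multiset.replicate (#s - 2) 0) ∨
      ∑ x ∈ s, e x ^ 2 < (m - 2) ^ 2 + 4 := by
  classical
  obtain ⟨v, hv, hmax⟩ := exists_max_image s e (card_pos.1 (by omega))
  obtain ⟨w, hw, hwv⟩ := exists_mem_ne hs v
  obtain ⟨b, hb⟩ : ∃ b, ∑ x ∈ s.erase v, e x = b := ⟨_, rfl⟩
  have hvb : e v + b = m := by rw [← hb, add_sum_erase s e hv, hsum]
  obtain ⟨t, rfl⟩ := Nat.exists_eq_add_of_le' hm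
  rcases Nat.lt_or_ge 2 b with hb3 | hb2
  · exact .inr (sum_sq_lt_of_sum_eq_add_three (fun x hx => (hmax x hx).trans (by omega)) hsum)
  by_cases hconc : ∃ w ∈ s.erase v, b ≤ e w
  · obtain ⟨w, hw, hwb⟩ := hconc
    exact .inl ⟨b, hb2, map_val_eq_of_le_of_le hv (mem_of_mem_erase hw)
      (ne_of_mem_erase hw).symm (by omega) hwb (by omega)⟩
  · right
    push Not at hconc
    have hb_two : b = 2 := by
      by_contra hne
      have hzero : ∑ x ∈ s.erase v, e x = 0 := sum_eq_zero fun x hx => by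
        have := hconc x hx
        omega
      have := hconc w (mem_erase.2 ⟨hwv, hw⟩)
      omega
    have hrest := sum_sq_le_mul_sum fun x hx => Nat.le_sub_one_of_lt (hconc x hx)
    have hev : e v = t + 1 := by omega
    rw [hb, hb_two] at hrest
    rw [← add_sum_erase s _ hv, hev, show t + 3 - 2 = t + 1 by rfl]
    omega

end SumOfSquares

section SpectralMoments

open Finset
open scoped Matrix

variable {V : Type*} {G : SimpleGraph V}

lemma subsingleton_commonNeighbors_of_isAcyclic (hG : G.IsAcyclic) {a b : V} (hab : a ≠ b) :
    (G.commonNeighbors a b).Subsingleton := by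
  rintro c ⟨hac, hbc⟩ d ⟨had, hbd⟩
  rw [mem_neighborSet] at hac hbc had hbd
  let pathVia {x : V} (hax : G.Adj a x) (hbx : G.Adj b x) : G.Path a b :=
    ⟨.cons hax (.cons hbx.symm .nil), by simp [hax.ne, hbx.ne', hab]⟩
  have hpath : pathVia hac hbc = pathVia had hbd := (hG.subsingleton_path a b).elim _ _
  simpa [pathVia] using congrArg (·.1.snd) hpath

variable [Fintype V]

section Semiring

variable (R : Type*) [Semiring R] [DecidableRel G.Adj] [DecidableEq V]

variable (G) in
lemma sum_sum_adjMatrix_sq_apply :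
    ∑ a, ∑ b, (G.adjMatrix R ^ 2) a b = ∑ a, (G.degree a : R) ^ 2 := by
  calc ∑ a, ∑ b, (G.adjMatrix R ^ 2) a b
      = 1 ⬝ᵥ (G.adjMatrix R ^ 2) *ᵥ 1 := by simp [dotProduct, Matrix.mulVec]
    _ = (1 ᵥ* G.adjMatrix R) ⬝ᵥ (G.adjMatrix R *ᵥ 1) := by
      rw [sq, ← Matrix.mulVec_mulVec, Matrix.dotProduct_mulVec]
    _ = ∑ a, (G.degree a : R) ^ 2 := by
      simp [dotProduct, sq]

lemma adjMatrix_sq_apply_eq_zero_or_one (hG : G.IsAcyclic) {a b : V} (hab : a ≠ b) :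
    (G.adjMatrix R ^ 2) a b = 0 ∨ (G.adjMatrix R ^ 2) a b = 1 := by
  have hcard : Fintype.card {p : G.Walk a b | p.length = 2} ≤ 1 := by
    rw [Fintype.card_le_one_iff_subsingleton]
    have := (subsingleton_commonNeighbors_of_isAcyclic hG hab).coe_sort
    exact (G.walkLengthTwoEquivCommonNeighbors a b).subsingleton
  rw [adjMatrix_pow_apply_eq_card_walk]
  exact (Nat.le_one_iff_eq_zero_or_eq_one.1 hcard).imp (by simp [·]) (by simp [·])

end Semiring

lemma adjMat_eq_adjMatrix [DecidableRel G.Adj] : adjMat G = G.adjMatrix ℝ := by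
  ext a b
  simp [adjMat, adjMatrix_apply]

variable [DecidableEq V]

lemma spectralMoment_zero : spectralMoment G 0 = Fintype.card V := by
  simp [spectralMoment]

lemma spectralMoment_eq_zero_of_odd (hG : G.Colorable 2) {k : ℕ} (hk : Odd k) :
    spectralMoment G k = 0 := by
  classical
  rw [spectralMoment, adjMat_eq_adjMatrix, Matrix.trace]
  refine sum_eq_zero fun a _ => ?_
  rw [Matrix.diag_apply, adjMatrix_pow_apply_eq_card_walk, Nat.cast_eq_zero,
    Fintype.card_eq_zero_iff]
  exact ⟨fun ⟨w, hw⟩ => Nat.not_even_iff_odd.2 (hw ▸ hk)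
    (two_colorable_iff_forall_loop_even.1 hG a w)⟩

variable [DecidableRel G.Adj]

lemma spectralMoment_two : spectralMoment G 2 = 2 * #G.edgeFinset := by
  rw [spectralMoment, adjMat_eq_adjMatrix, sq, Matrix.trace]
  simp only [Matrix.diag_apply, adjMatrix_mul_self_apply_self]
  exact_mod_cast G.sum_degrees_eq_twice_card_edges

lemma spectralMoment_four_eq_sum_sum_sq :
    spectralMoment G 4 = ∑ a, ∑ b, (G.adjMatrix ℝ ^ 2) a b ^ 2 := by
  have hsymm (a b : V) : (G.adjMatrix ℝ ^ 2) b a = (G.adjMatrix ℝ ^ 2) a b :=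
    (G.isSymm_adjMatrix.pow 2).apply a b
  rw [spectralMoment, adjMat_eq_adjMatrix, show 4 = 2 + 2 from rfl, pow_add, Matrix.trace]
  refine sum_congr rfl fun a _ => ?_
  rw [Matrix.diag_apply, Matrix.mul_apply]
  exact sum_congr rfl fun b _ => by rw [hsymm a b, ← sq]

lemma spectralMoment_four_of_isAcyclic (hG : G.IsAcyclic) :
    spectralMoment G 4 = 2 * ∑ a, (G.degree a : ℝ) ^ 2 - 2 * #G.edgeFinset := by
  have hentry (a b : V) : (G.adjMatrix ℝ ^ 2) a b ^ 2 =
      (G.adjMatrix ℝ ^ 2) a b + if a = b then (G.degree a : ℝ) ^ 2 - G.degree a else 0 := by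
    split_ifs with hab
    · rw [← hab, sq (G.adjMatrix ℝ), adjMatrix_mul_self_apply_self]
      ring
    · rcases adjMatrix_sq_apply_eq_zero_or_one ℝ hG hab with h | h <;> simp [h]
  have hdegree : ∑ a, (G.degree a : ℝ) = 2 * #G.edgeFinset := by
    exact_mod_cast G.sum_degrees_eq_twice_card_edges
  simp only [spectralMoment_four_eq_sum_sum_sq, hentry, sum_add_distrib,
    sum_sum_adjMatrix_sq_apply, sum_ite_eq, mem_univ, if_true, sum_sub_distrib, hdegree]
  ring

end SpectralMoments

section Excess

open Finset

variable {V : Type*}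

/-- The excess of a vertex of a tree is its degree minus one. On each colour class of a tree
the excesses add up to the size of the other class minus one. An isolated vertex has excess `0`. -/
def excess (G : SimpleGraph V) (v : V) [Fintype (G.neighborSet v)] : ℕ :=
  G.degree v - 1

variable [Fintype V] {G H : SimpleGraph V} [DecidableRel G.Adj] [DecidableRel H.Adj]

lemma excess_add_one_of_connected [Nontrivial V] (hG : G.Connected) (v : V) :
    excess G v + 1 = G.degree v :=
  Nat.sub_add_cancel (hG.preconnected.degree_pos_of_nontrivial v)

variable [DecidableEq V]

lemma spectralMoment_four_of_isTree [Nontrivial V] (hG : G.IsTree) :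
    spectralMoment G 4 = 2 * ∑ v, excess G v ^ 2 + 4 * Fintype.card V - 6 := by
  have hedges : (#G.edgeFinset : ℝ) + 1 = Fintype.card V := by
    exact_mod_cast hG.card_edgeFinset
  have hdegree : ∑ v, (G.degree v : ℝ) = 2 * #G.edgeFinset := by
    exact_mod_cast G.sum_degrees_eq_twice_card_edges
  have hexcess (v : V) : (excess G v : ℝ) ^ 2 = G.degree v ^ 2 - 2 * G.degree v + 1 := by
    rw [← excess_add_one_of_connected hG.connected]
    push_cast
    ring
  simp only [spectralMoment_four_of_isAcyclic hG.isAcyclic, Nat.cast_sum, Nat.cast_pow, hexcess,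
    sum_add_distrib, sum_sub_distrib, ← mul_sum, hdegree, sum_const, card_univ, nsmul_one]
  linarith

lemma sLt_of_sum_excess_sq_lt (hV : 5 ≤ Fintype.card V) (hG : G.IsTree) (hH : H.IsTree)
    (hlt : ∑ v, excess G v ^ 2 < ∑ v, excess H v ^ 2) : SLt G H := by
  have : Nontrivial V := Fintype.one_lt_card_iff_nontrivial.1 (by omega)
  refine ⟨4, by omega, by omega, fun i hi => ?_, ?_⟩
  · interval_cases i
    · rw [spectralMoment_zero, spectralMoment_zero]
    · rw [spectralMoment_eq_zero_of_odd hG.colorable_two odd_one,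
        spectralMoment_eq_zero_of_odd hH.colorable_two odd_one]
    · rw [spectralMoment_two, spectralMoment_two,
        Nat.add_right_cancel (hG.card_edgeFinset.trans hH.card_edgeFinset.symm)]
    · rw [spectralMoment_eq_zero_of_odd hG.colorable_two (by decide),
        spectralMoment_eq_zero_of_odd hH.colorable_two (by decide)]
  · rw [spectralMoment_four_of_isTree hG, spectralMoment_four_of_isTree hH]
    have : (∑ v, excess G v ^ 2 : ℝ) < ∑ v, (excess H v : ℝ) ^ 2 := by exact_mod_cast hlt
    push_cast
    linarith

end Excess

section BipartiteTree

open Finset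

variable {V : Type*} {G : SimpleGraph V} {X Y : Finset V}

/-- `G` is a tree with colour classes `X` and `Y`. -/
structure IsBipartiteTree (G : SimpleGraph V) (X Y : Finset V) : Prop where
  isTree : G.IsTree
  isBipartiteWith : G.IsBipartiteWith X Y
  mem_or_mem : ∀ v, v ∈ X ∨ v ∈ Y

lemma TreeBip.exists_isBipartiteTree {p q : ℕ} {T : SimpleGraph (Fin (p + q))}
    (hT : TreeBip p q T) : ∃ X Y, IsBipartiteTree T X Y ∧ #X = p ∧ #Y = q := by
  obtain ⟨hT, X, hX, hadj⟩ := hT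
  refine ⟨X, Xᶜ, ⟨hT, ⟨?_, fun x y hxy => ?_⟩, fun x => ?_⟩, hX, ?_⟩
  · simpa using disjoint_compl_right
  · have := hadj hxy
    simp only [mem_coe, mem_compl]
    tauto
  · simpa using em (x ∈ X)
  · rw [card_compl, hX, Fintype.card_fin, Nat.add_sub_cancel_left]

namespace IsBipartiteTree

lemma symm (hG : IsBipartiteTree G X Y) : IsBipartiteTree G Y X :=
  ⟨hG.isTree, hG.isBipartiteWith.symm, fun v => (hG.mem_or_mem v).symm⟩

lemma disjoint (hG : IsBipartiteTree G X Y) : Disjoint X Y :=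
  disjoint_coe.1 hG.isBipartiteWith.disjoint

variable [Fintype V]

lemma disjUnion_eq_univ (hG : IsBipartiteTree G X Y) : X.disjUnion Y hG.disjoint = univ :=
  eq_univ_of_forall fun v => mem_disjUnion.2 (hG.mem_or_mem v)

lemma card_add_card (hG : IsBipartiteTree G X Y) : #X + #Y = Fintype.card V := by
  rw [← card_disjUnion X Y hG.disjoint, hG.disjUnion_eq_univ, card_univ]

lemma sum_add_sum {M : Type*} [AddCommMonoid M] (hG : IsBipartiteTree G X Y) (f : V → M) :
    ∑ x ∈ X, f x + ∑ y ∈ Y, f y = ∑ v, f v := by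
  rw [← sum_disjUnion hG.disjoint, hG.disjUnion_eq_univ]

variable [DecidableRel G.Adj]

lemma excess_le (hG : IsBipartiteTree G X Y) {x : V} (hx : x ∈ X) : excess G x ≤ #Y - 1 :=
  Nat.sub_le_sub_right (isBipartiteWith_degree_le hG.isBipartiteWith hx) 1

lemma sum_excess [Nontrivial V] (hG : IsBipartiteTree G X Y) :
    ∑ x ∈ X, excess G x = #Y - 1 := by
  have hedges := hG.isTree.card_edgeFinset
  have hcard := hG.card_add_card
  have hdegree := isBipartiteWith_sum_degrees_eq_card_edges hG.isBipartiteWith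
  simp only [← excess_add_one_of_connected hG.isTree.connected, sum_add_distrib, sum_const,
    smul_eq_mul, mul_one] at hdegree
  omega

end IsBipartiteTree

end BipartiteTree

section HubTree

open Finset

lemma exists_equiv_of_card_fiber_eq {α β γ : Type*} [Finite α] [Finite β] {f : α → γ} {g : β → γ}
    (h : ∀ c, Nat.card {a // f a = c} = Nat.card {b // g b = c}) :
    ∃ e : α ≃ β, ∀ a, g (e a) = f a := by
  have e (c : γ) : {a // f a = c} ≃ {b // g b = c} := (Finite.card_eq.1 (h c)).some
  exact ⟨Equiv.ofFiberEquiv e, Equiv.ofFiberEquiv_map e⟩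

lemma exists_equiv_of_map_univ_val_eq {α β γ : Type*} [Fintype α] [Fintype β] {f : α → γ}
    {g : β → γ} (h : univ.val.map f = univ.val.map g) : ∃ e : α ≃ β, ∀ a, g (e a) = f a := by
  classical
  refine exists_equiv_of_card_fiber_eq fun c => ?_
  have hcount := congrArg (Multiset.count c) h
  simp only [Multiset.count_map, ← filter_val, ← card_def] at hcount
  simpa only [Nat.card_eq_fintype_card, Fintype.card_subtype, eq_comm (a := c)] using hcount

/-- The spider whose legs, indexed by `ι`, all have length two: `inl none` is its body, `inr i`
the knee and `inl (some i)` the foot of the leg `i`. Every tree with a hub is obtained from a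
spider by replacing each foot by some number of copies of it. -/
def spider (ι : Type*) : SimpleGraph (Option ι ⊕ ι) :=
  SimpleGraph.fromRel fun a b => ∃ i, b = .inr i ∧ (a = .inl none ∨ a = .inl (some i))

lemma spider_adj {ι : Type*} {a b : Option ι ⊕ ι} :
    (spider ι).Adj a b ↔ (∃ i, b = .inr i ∧ (a = .inl none ∨ a = .inl (some i))) ∨
      ∃ i, a = .inr i ∧ (b = .inl none ∨ b = .inl (some i)) := by
  rw [spider, fromRel_adj, and_iff_right_iff_imp]
  rintro (⟨i, rfl, rfl | rfl⟩ | ⟨i, rfl, rfl | rfl⟩) <;> simp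

variable {V W : Type*} {G : SimpleGraph V} {H : SimpleGraph W} {X Y : Finset V}
  {X' Y' : Finset W} {u : V} {u' : W}

/-- `G` is a tree with colour classes `X` and `Y`, and `u ∈ X` is a hub: a vertex adjacent to all
of `Y`. -/
structure IsHubTree (G : SimpleGraph V) (X Y : Finset V) (u : V) : Prop
    extends IsBipartiteTree G X Y where
  hub_mem : u ∈ X
  adj_hub : ∀ y ∈ Y, G.Adj u y

/-- `c` labels the vertices of a tree with hub `u` and `Y` as the opposite colour class by the
vertices of the spider with legs `Y`, of which the tree is then a blow-up. The legs are relabelled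
along `φ : Y ≃ ι` so that two trees can be compared. -/
structure IsSpiderLabelling (G : SimpleGraph V) (u : V) {ι : Type*} (φ : Y ≃ ι)
    (c : V → Option ι ⊕ ι) : Prop where
  eq_body_iff : ∀ v, c v = .inl none ↔ v = u
  eq_knee_iff : ∀ v i, c v = .inr i ↔ v = φ.symm i
  eq_foot_iff : ∀ v i, c v = .inl (some i) ↔ G.Adj (φ.symm i) v ∧ v ≠ u

namespace IsSpiderLabelling

variable {ι : Type*} {φ : Y ≃ ι} {c : V → Option ι ⊕ ι}

lemma card_body (hc : IsSpiderLabelling G u φ c) : Nat.card {v // c v = .inl none} = 1 := by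
  simp [hc.eq_body_iff]

lemma card_knee (hc : IsSpiderLabelling G u φ c) (i : ι) : Nat.card {v // c v = .inr i} = 1 := by
  simp [hc.eq_knee_iff]

lemma card_foot [Fintype V] [DecidableRel G.Adj] (hc : IsSpiderLabelling G u φ c) (i : ι)
    (hu : G.Adj (φ.symm i) u) :
    Nat.card {v // c v = .inl (some i)} = excess G (φ.symm i : V) := by
  classical
  rw [excess, ← card_neighborFinset_eq_degree,
    ← card_erase_of_mem ((G.mem_neighborFinset _ _).2 hu)]
  refine Nat.subtype_card _ fun v => ?_
  rw [hc.eq_foot_iff, mem_erase, mem_neighborFinset, and_comm]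

end IsSpiderLabelling

namespace IsHubTree

lemma exists_forall_adj_iff [Nontrivial V] (hG : IsHubTree G X Y u) {x : V} (hx : x ∈ X)
    (hxu : x ≠ u) : ∃ y : Y, ∀ z : Y, G.Adj z x ↔ z = y := by
  obtain ⟨y, hxy⟩ := hG.isTree.connected.preconnected.exists_adj_of_nontrivial x
  have hy : y ∈ Y := hG.isBipartiteWith.mem_of_mem_adj hx hxy
  refine ⟨⟨y, hy⟩, fun z => ⟨fun hzx => Subtype.ext ?_, fun hzy => hzy ▸ hxy.symm⟩⟩
  exact subsingleton_commonNeighbors_of_isAcyclic hG.isTree.isAcyclic hxu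
    ⟨hzx.symm, hG.adj_hub z z.2⟩ ⟨hxy, hG.adj_hub y hy⟩

lemma exists_isSpiderLabelling [Nontrivial V] (hG : IsHubTree G X Y u) {ι : Type*} (φ : Y ≃ ι) :
    ∃ c : V → Option ι ⊕ ι, IsSpiderLabelling G u φ c := by
  have hlabel (v : V) : ∃ a : Option ι ⊕ ι, (a = .inl none ↔ v = u) ∧
      (∀ i, a = .inr i ↔ v = φ.symm i) ∧
      ∀ i, a = .inl (some i) ↔ G.Adj (φ.symm i) v ∧ v ≠ u := by
    have hX (hv : v ∈ X) (i : ι) : v ≠ φ.symm i :=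
      fun hvi => disjoint_left.1 hG.disjoint hv (hvi ▸ (φ.symm i).2)
    have hY (hv : v ∈ Y) : ¬ v = u ∧ ∀ i, ¬ G.Adj (φ.symm i) v :=
      ⟨fun hvu => disjoint_left.1 hG.disjoint hG.hub_mem (hvu ▸ hv), fun i hadj =>
        disjoint_left.1 hG.disjoint
          (hG.symm.isBipartiteWith.mem_of_mem_adj (φ.symm i).2 hadj) hv⟩
    rcases hG.mem_or_mem v with hv | hv
    · by_cases hvu : v = u
      · exact ⟨.inl none, by simp [hvu], by simpa using hX hv, by simp [hvu]⟩
      · obtain ⟨y, hy⟩ := hG.exists_forall_adj_iff hv hvu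
        refine ⟨.inl (some (φ y)), by simp [hvu], by simpa using hX hv, fun i => ?_⟩
        simp [hy, hvu, φ.symm_apply_eq, eq_comm]
    · refine ⟨.inr (φ ⟨v, hv⟩), by simp [hY hv], fun i => ?_, by simp [hY hv]⟩
      rw [Sum.inr.injEq, ← φ.eq_symm_apply, Subtype.ext_iff]
  choose c hbody hknee hfoot using hlabel
  exact ⟨c, hbody, hknee, hfoot⟩

lemma eq_comap_spider {ι : Type*} (hG : IsHubTree G X Y u) {φ : Y ≃ ι} {c : V → Option ι ⊕ ι}
    (hc : IsSpiderLabelling G u φ c) : G = (spider ι).comap c := by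
  have hknee (v w : V) : (∃ i, c w = .inr i ∧ (c v = .inl none ∨ c v = .inl (some i))) ↔
      w ∈ Y ∧ G.Adj v w := by
    simp only [hc.eq_body_iff, hc.eq_knee_iff, hc.eq_foot_iff]
    constructor
    · rintro ⟨i, rfl, rfl | ⟨hadj, -⟩⟩
      · exact ⟨(φ.symm i).2, hG.adj_hub _ (φ.symm i).2⟩
      · exact ⟨(φ.symm i).2, hadj.symm⟩
    · rintro ⟨hw, hadj⟩
      refine ⟨φ ⟨w, hw⟩, by simp, ?_⟩
      simpa [hadj.symm] using em (v = u)
  ext v w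
  rw [comap_adj, spider_adj, hknee, hknee, G.adj_comm w v, ← or_and_right, Iff.comm,
    and_iff_right_iff_imp]
  intro hadj
  rcases hG.isBipartiteWith.mem_of_adj hadj with ⟨-, hw⟩ | ⟨hv, -⟩
  exacts [.inl hw, .inr hv]

lemma nonempty_iso [Fintype V] [Nontrivial V] [Fintype W] [Nontrivial W] [DecidableRel G.Adj]
    [DecidableRel H.Adj] (hG : IsHubTree G X Y u) (hH : IsHubTree H X' Y' u')
    (h : Y.val.map (excess G ·) = Y'.val.map (excess H ·)) : Nonempty (G ≃g H) := by
  obtain ⟨φ, hφ⟩ := exists_equiv_of_map_univ_val_eq (α := Y) (β := Y') (f := (excess G ·))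
    (g := (excess H ·)) <| (Y.val.attach_map_val' (excess G ·)).trans <|
      h.trans (Y'.val.attach_map_val' (excess H ·)).symm
  obtain ⟨c, hc⟩ := hG.exists_isSpiderLabelling φ
  obtain ⟨d, hd⟩ := hH.exists_isSpiderLabelling (Equiv.refl Y')
  obtain ⟨e, he⟩ := exists_equiv_of_card_fiber_eq (f := c) (g := d) fun
    | .inl none => by rw [hc.card_body, hd.card_body]
    | .inr i => by rw [hc.card_knee, hd.card_knee]
    | .inl (some i) => by
      rw [hc.card_foot i (hG.adj_hub _ (φ.symm i).2).symm, hd.card_foot i (hH.adj_hub _ i.2).symm,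
        ← hφ, Equiv.apply_symm_apply]
      rfl
  refine ⟨e, fun {v w} => ?_⟩
  rw [hG.eq_comap_spider hc, hH.eq_comap_spider hd, comap_adj, comap_adj, he, he]

variable [Fintype V] [DecidableRel G.Adj]

lemma excess_hub (hG : IsHubTree G X Y u) : excess G u = #Y - 1 := by
  refine le_antisymm (hG.excess_le hG.hub_mem) (Nat.sub_le_sub_right ?_ 1)
  rw [← card_neighborFinset_eq_degree]
  exact card_le_card fun y hy => (G.mem_neighborFinset u y).2 (hG.adj_hub y hy)

lemma sum_excess_sq [Nontrivial V] (hG : IsHubTree G X Y u) :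
    ∑ x ∈ X, excess G x ^ 2 = (#Y - 1) ^ 2 := by
  apply le_antisymm
  · rw [← hG.sum_excess]
    exact sum_sq_le_sq_sum_of_nonneg fun x _ => Nat.zero_le (excess G x)
  · rw [← hG.excess_hub]
    exact single_le_sum_of_canonicallyOrdered (f := fun x => excess G x ^ 2) hG.hub_mem

lemma sum_excess_sq_of_map_eq [Nontrivial V] (hG : IsHubTree G X Y u) {a b r : ℕ}
    (h : Y.val.map (excess G ·) = a ::ₘ b ::ₘ Multiset.replicate r 0) :
    ∑ v, excess G v ^ 2 = (#Y - 1) ^ 2 + a ^ 2 + b ^ 2 := by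
  have hY : ∑ y ∈ Y, excess G y ^ 2 = ((Y.val.map (excess G ·)).map (· ^ 2)).sum := by
    rw [Multiset.map_map]
    rfl
  rw [← hG.sum_add_sum, hG.sum_excess_sq, hY, h]
  simp [add_assoc]

end IsHubTree

lemma IsBipartiteTree.isHubTree [Fintype V] [Nontrivial V] [DecidableRel G.Adj]
    (hG : IsBipartiteTree G X Y) (hu : u ∈ X) (hle : #Y - 1 ≤ excess G u) :
    IsHubTree G X Y u := by
  refine ⟨hG, hu, fun y hy => ?_⟩
  have hsub := isBipartiteWith_neighborFinset_subset hG.isBipartiteWith hu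
  have hcard : #Y ≤ #(G.neighborFinset u) := by
    rw [card_neighborFinset_eq_degree, ← excess_add_one_of_connected hG.isTree.connected]
    omega
  rwa [← eq_of_subset_of_card_le hsub hcard, mem_neighborFinset] at hy

end HubTree

section BTree

open Finset

lemma isTree_of_existsUnique_adj_lt {V : Type*} [Finite V] [LinearOrder V] [OrderBot V]
    {G : SimpleGraph V} (h : ∀ x ≠ ⊥, ∃! y, y < x ∧ G.Adj x y) : G.IsTree := by
  classical
  have := Fintype.ofFinite V
  choose! parent hparent hunique using h
  have hreach (x : V) : G.Reachable x ⊥ := by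
    induction x using WellFoundedLT.induction with | ind x ih
    rcases eq_or_ne x ⊥ with rfl | hx
    · rfl
    · exact (hparent x hx).2.reachable.trans (ih _ (hparent x hx).1)
  have hconn : G.Connected := ⟨fun x y => (hreach x).trans (hreach y).symm⟩
  have hedges : G.edgeFinset ⊆ (univ.erase ⊥).image fun x => s(x, parent x) := by
    intro e he
    induction e with | h x y
    wlog hyx : y < x generalizing x y
    · rw [Sym2.eq_swap] at he ⊢
      rw [mem_edgeFinset, mem_edgeSet] at he
      exact this y x (by simpa using he) (lt_of_le_of_ne (not_lt.1 hyx) he.ne')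
    rw [mem_edgeFinset, mem_edgeSet] at he
    have hx : x ≠ ⊥ := hyx.ne_bot
    rw [hunique x hx y ⟨hyx, he⟩]
    exact mem_image_of_mem _ (mem_erase.2 ⟨hx, mem_univ x⟩)
  refine (isTree_iff_connected_and_card).2 ⟨hconn, ?_⟩
  have hle := (card_le_card hedges).trans card_image_le
  have hge := hconn.card_vert_le_card_edgeSet_add_one
  have hpos : 0 < Fintype.card V := Fintype.card_pos
  rw [card_erase_of_mem (mem_univ _), card_univ] at hle
  rw [Nat.card_eq_fintype_card, Nat.card_eq_fintype_card, ← edgeFinset_card] at hge ⊢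
  omega

lemma card_le_excess {V : Type*} {G : SimpleGraph V} {u v : V} {s : Finset V}
    [Fintype (G.neighborSet v)] (hu : G.Adj v u) (hs : ∀ x ∈ s, G.Adj v x) (hus : u ∉ s) :
    #s ≤ excess G v := by
  have hle : #(s.cons u hus) ≤ G.degree v := by
    rw [← card_neighborFinset_eq_degree]
    refine card_le_card fun x hx => (G.mem_neighborFinset v x).2 ?_
    rcases mem_cons.1 hx with rfl | hx
    exacts [hu, hs x hx]
  rw [card_cons] at hle
  exact Nat.le_sub_one_of_lt hle

/-- The colour class `{1, …, q}` of `B_{p,q}^{k,l}`, opposite to the class of the hub `0`. -/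
def bTreeClass (p q : ℕ) : Finset (Fin (p + q)) :=
  {x | 0 < x.val ∧ x.val ≤ q}

/-- The parent of the vertex `x ≠ 0` of `B_{p,q}^{k,l}` rooted at the hub `0`. The vertices are
numbered so that a parent precedes its children. -/
def bTreeParent (q k l x : ℕ) : ℕ :=
  if x ≤ q then 0 else if x ≤ q + k then 2 else if x ≤ q + k + l then x - (q + k) + 2 else 1

variable {p q k l : ℕ}

lemma mem_bTreeClass {x : Fin (p + q)} : x ∈ bTreeClass p q ↔ 0 < x.val ∧ x.val ≤ q := by
  simp only [bTreeClass, mem_filter, mem_univ, true_and]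

lemma card_bTreeClass (hp : 0 < p) : #(bTreeClass p q) = q := by
  have h : bTreeClass p q = Ioc ⟨0, by omega⟩ ⟨q, by omega⟩ := by
    ext x
    rw [mem_bTreeClass, mem_Ioc, Fin.lt_def, Fin.le_def]
  rw [h, Fin.card_Ioc, Nat.sub_zero]

lemma bTree_adj_iff_of_lt (hq : 2 ≤ q) {x y : Fin (p + q)} (hyx : y < x) :
    (BTree p q k l).Adj x y ↔ y.val = bTreeParent q k l x := by
  have hne : x ≠ y := hyx.ne'
  rw [Fin.lt_def] at hyx
  simp only [BTree, fromRel_adj, ne_eq, hne, not_false_eq_true, true_and, bTreeParent]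
  split_ifs <;> omega

lemma bTreeParent_lt (hlq : l + 2 ≤ q) {x : ℕ} (hx : 0 < x) : bTreeParent q k l x < x := by
  unfold bTreeParent
  split_ifs <;> omega

lemma bTree_isTree (hlq : l + 2 ≤ q) : (BTree p q k l).IsTree := by
  have : NeZero (p + q) := ⟨by omega⟩
  refine isTree_of_existsUnique_adj_lt fun x hx => ?_
  have hlt : bTreeParent q k l x < x :=
    bTreeParent_lt hlq (Nat.pos_of_ne_zero fun h => hx (Fin.ext h))
  exact ⟨⟨bTreeParent q k l x, hlt.trans x.2⟩,
    ⟨hlt, (bTree_adj_iff_of_lt (by omega) hlt).2 rfl⟩,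
    fun y ⟨hyx, hxy⟩ => Fin.ext ((bTree_adj_iff_of_lt (by omega) hyx).1 hxy)⟩

lemma mem_bTreeClass_iff_of_adj (hlq : l + 2 ≤ q) {x y : Fin (p + q)}
    (hxy : (BTree p q k l).Adj x y) : x ∈ bTreeClass p q ↔ y ∉ bTreeClass p q := by
  wlog hyx : y < x generalizing x y
  · have := this hxy.symm (lt_of_le_of_ne (not_lt.1 hyx) hxy.ne)
    tauto
  rw [bTree_adj_iff_of_lt (by omega) hyx] at hxy
  rw [Fin.lt_def] at hyx
  simp only [mem_bTreeClass, hxy, bTreeParent] at hyx ⊢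
  split_ifs <;> omega

lemma bTree_isHubTree (hlq : l + 2 ≤ q) :
    IsHubTree (BTree p q k l) (bTreeClass p q)ᶜ (bTreeClass p q) ⟨0, by omega⟩ := by
  refine ⟨⟨bTree_isTree hlq, ⟨?_, fun x y hxy => ?_⟩, fun x => ?_⟩, ?_, fun y hy => ?_⟩
  · simpa using disjoint_compl_left
  · have := mem_bTreeClass_iff_of_adj hlq hxy
    simp only [mem_coe, mem_compl]
    tauto
  · simpa using em' (x ∈ bTreeClass p q)
  · simp only [mem_compl, mem_bTreeClass, lt_irrefl, false_and, not_false_eq_true]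
  · rw [mem_bTreeClass] at hy
    exact ((bTree_adj_iff_of_lt (by omega) hy.1).2 (if_pos hy.2).symm).symm

section Excess

variable [DecidableRel (BTree p q k l).Adj]

lemma card_le_excess_bTree (hlq : l + 2 ≤ q) {v : Fin (p + q)} (hv : v ∈ bTreeClass p q)
    {s : Finset (Fin (p + q))} (hs : ∀ x ∈ s, q < x.val ∧ v.val = bTreeParent q k l x) :
    #s ≤ excess (BTree p q k l) v := by
  have hvq := (mem_bTreeClass.1 hv).2
  refine card_le_excess ((bTree_isHubTree hlq).adj_hub v hv).symm (fun x hx => ?_) fun h0 => ?_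
  · exact ((bTree_adj_iff_of_lt (by omega) (hvq.trans_lt (hs x hx).1)).2 (hs x hx).2).symm
  · exact Nat.not_lt_zero _ (hs _ h0).1

lemma le_excess_bTree_of_eq_one (hkl : k + l < p) (hlq : l + 2 ≤ q) {v : Fin (p + q)}
    (hv : v.val = 1) : p - 1 - (k + l) ≤ excess (BTree p q k l) v := by
  have hcard := card_le_excess_bTree (k := k) hlq (mem_bTreeClass.2 (by omega : 0 < v.val ∧ _))
    (s := Ioi ⟨q + k + l, by omega⟩) fun x hx => by
      simp only [mem_Ioi, Fin.lt_def] at hx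
      unfold bTreeParent
      split_ifs <;> omega
  simp only [Fin.card_Ioi] at hcard
  omega

/-- The two cases are those in which all the `k + l` leaves that do not hang on `v` share a
neighbor. -/
lemma le_excess_bTree_of_eq_add_two (hkl : k + l < p) (hlq : l + 2 ≤ q)
    (h : l = 0 ∨ k = 0 ∧ l = 1) {w : Fin (p + q)} (hw : w.val = l + 2) :
    k + l ≤ excess (BTree p q k l) w := by
  have hcard := card_le_excess_bTree (k := k) hlq (mem_bTreeClass.2 (by omega : 0 < w.val ∧ _))
    (s := Ioc ⟨q, by omega⟩ ⟨q + k + l, by omega⟩) fun x hx => by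
      simp only [mem_Ioc, Fin.lt_def, Fin.le_def] at hx
      unfold bTreeParent
      split_ifs <;> omega
  simp only [Fin.card_Ioc] at hcard
  omega

lemma map_excess_bTree (hkl : k + l < p) (hlq : l + 2 ≤ q) (h : l = 0 ∨ k = 0 ∧ l = 1) :
    (bTreeClass p q).val.map (excess (BTree p q k l) ·) =
      (p - 1 - (k + l)) ::ₘ (k + l) ::ₘ Multiset.replicate (q - 2) 0 := by
  have : Nontrivial (Fin (p + q)) := Fin.nontrivial_iff_two_le.2 (by omega)
  have hcard : #(bTreeClass p q) = q := card_bTreeClass (by omega)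
  have hsum := (bTree_isHubTree (p := p) (k := k) hlq).symm.sum_excess
  rw [card_compl, Fintype.card_fin, hcard, Nat.add_sub_cancel] at hsum
  let v : Fin (p + q) := ⟨1, by omega⟩
  let w : Fin (p + q) := ⟨l + 2, by omega⟩
  have hv : v ∈ bTreeClass p q := mem_bTreeClass.2 ⟨one_pos, (by omega : 1 ≤ q)⟩
  have hw : w ∈ bTreeClass p q := mem_bTreeClass.2 ⟨Nat.succ_pos _, hlq⟩
  have hvw : v ≠ w := Fin.ne_of_val_ne (by omega : 1 ≠ l + 2)
  have hmap := map_val_eq_of_le_of_le (e := (excess (BTree p q k l) ·)) hv hw hvw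
    (le_excess_bTree_of_eq_one hkl hlq rfl) (le_excess_bTree_of_eq_add_two hkl hlq h rfl)
    (by omega)
  rwa [hcard] at hmap

lemma sum_excess_sq_bTree (hkl : k + l < p) (hlq : l + 2 ≤ q) (h : l = 0 ∨ k = 0 ∧ l = 1) :
    ∑ v, excess (BTree p q k l) v ^ 2 = (q - 1) ^ 2 + (p - 1 - (k + l)) ^ 2 + (k + l) ^ 2 := by
  have : Nontrivial (Fin (p + q)) := Fin.nontrivial_iff_two_le.2 (by omega)
  rw [(bTree_isHubTree hlq).sum_excess_sq_of_map_eq (map_excess_bTree hkl hlq h),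
    card_bTreeClass (by omega)]

end Excess

lemma IsHubTree.nonempty_iso_bTree {V : Type*} [Fintype V] [Nontrivial V] {G : SimpleGraph V}
    [DecidableRel G.Adj] {X Y : Finset V} {u : V} (hG : IsHubTree G X Y u) (hkl : k + l < p)
    (hlq : l + 2 ≤ q) (h : l = 0 ∨ k = 0 ∧ l = 1) (hmap : Y.val.map (excess G ·) =
      (p - 1 - (k + l)) ::ₘ (k + l) ::ₘ Multiset.replicate (q - 2) 0) :
    Nonempty (G ≃g BTree p q k l) := by
  classical
  have : Nontrivial (Fin (p + q)) := Fin.nontrivial_iff_two_le.2 (by omega)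
  exact hG.nonempty_iso (bTree_isHubTree hlq) (hmap.trans (map_excess_bTree hkl hlq h).symm)

end BTree

section Extremal

open Finset

variable {V : Type*} [Fintype V] [Nontrivial V] {G : SimpleGraph V} [DecidableRel G.Adj]
  {X Y : Finset V} {m : ℕ}

lemma IsHubTree.exists_map_excess_eq_or_sum_excess_sq_lt {u : V} (hm : 3 ≤ m)
    (hX : #X = m + 1) (hY : #Y = m + 1) (hG : IsHubTree G X Y u) :
    (∃ k ≤ 2, Y.val.map (excess G ·) = (m - k) ::ₘ k ::ₘ Multiset.replicate (m - 1) 0) ∨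
      ∑ v, excess G v ^ 2 < m ^ 2 + (m - 2) ^ 2 + 4 := by
  have hsumX : ∑ x ∈ X, excess G x ^ 2 = m ^ 2 := by
    rw [hG.sum_excess_sq, hY, Nat.add_sub_cancel]
  have hsumY : ∑ y ∈ Y, excess G y = m := by rw [hG.symm.sum_excess, hX, Nat.add_sub_cancel]
  refine (exists_map_val_eq_or_sum_sq_lt hm (by omega) hsumY).imp (fun h => ?_) fun hlt => ?_
  · rwa [hY] at h
  · rw [← hG.sum_add_sum fun v => excess G v ^ 2]
    omega

lemma IsBipartiteTree.sum_excess_sq_lt_of_forall_lt (hm : 3 ≤ m) (hX : #X = m + 1)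
    (hY : #Y = m + 1) (hG : IsBipartiteTree G X Y) (hlt : ∀ v, excess G v < m) :
    ∑ v, excess G v ^ 2 < m ^ 2 + (m - 2) ^ 2 + 4 := by
  have hclass {Z Z' : Finset V} (hZ : IsBipartiteTree G Z Z') (hcard : #Z' = m + 1) :
      ∑ z ∈ Z, excess G z ^ 2 ≤ (m - 1) ^ 2 + 1 ^ 2 :=
    sum_sq_le_sq_add_sq_of_le (fun z _ => Nat.le_sub_one_of_lt (hlt z)) (by omega)
      (by rw [hZ.sum_excess]; omega)
  have hsumX := hclass hG hY
  have hsumY := hclass hG.symm hX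
  rw [← hG.sum_add_sum fun v => excess G v ^ 2]
  obtain ⟨t, rfl⟩ := Nat.exists_eq_add_of_le' hm
  simp only [show t + 3 - 1 = t + 2 by rfl, show t + 3 - 2 = t + 1 by rfl] at *
  nlinarith

lemma IsBipartiteTree.exists_isHubTree_or_sum_excess_sq_lt (hm : 3 ≤ m) (hX : #X = m + 1)
    (hY : #Y = m + 1) (hG : IsBipartiteTree G X Y) :
    (∃ X Y u, IsHubTree G X Y u ∧
      ∃ k ≤ 2, Y.val.map (excess G ·) = (m - k) ::ₘ k ::ₘ Multiset.replicate (m - 1) 0) ∨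
      ∑ v, excess G v ^ 2 < m ^ 2 + (m - 2) ^ 2 + 4 := by
  by_cases hlt : ∀ v, excess G v < m
  · exact .inr (hG.sum_excess_sq_lt_of_forall_lt hm hX hY hlt)
  push Not at hlt
  obtain ⟨u, hu⟩ := hlt
  wlog huX : u ∈ X generalizing X Y
  · exact this hY hX hG.symm ((hG.mem_or_mem u).resolve_left huX)
  have hhub := hG.isHubTree huX (by omega)
  exact (hhub.exists_map_excess_eq_or_sum_excess_sq_lt hm hX hY).imp_left
    fun h => ⟨X, Y, u, hhub, h⟩

end Extremal

/-- For `p = q ≥ 4` and `n = p + q`, every tree `T ∈ 𝒯_n^{p,q}`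
isomorphic to none of `B_{p,q}^{0,0}`, `B_{p,q}^{0,1}`, `B_{p,q}^{2,0}` satisfies
`T ≺_s B_{p,q}^{2,0}`: `B_{p,q}^{2,0}` is the unique third last tree in the
S-order among `𝒯_n^{p,q}`. -/
theorem stmt_4 (p q : ℕ) (hp : 4 ≤ p) (hpq : p = q)
    (T : SimpleGraph (Fin (p + q))) (hT : TreeBip p q T)
    (h0 : ¬ Nonempty (T ≃g BTree p q 0 0))
    (h1 : ¬ Nonempty (T ≃g BTree p q 0 1))
    (h2 : ¬ Nonempty (T ≃g BTree p q 2 0)) :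
    SLt T (BTree p q 2 0) := by
  classical
  subst hpq
  obtain ⟨m, rfl⟩ : ∃ m, p = m + 1 := Nat.exists_eq_add_one.2 (by omega)
  have : Nontrivial (Fin (m + 1 + (m + 1))) := Fin.nontrivial_iff_two_le.2 (by omega)
  obtain ⟨X, Y, hXY, hX, hY⟩ := hT.exists_isBipartiteTree
  rcases hXY.exists_isHubTree_or_sum_excess_sq_lt (by omega) hX hY with
    ⟨X, Y, u, hhub, k, hk, hmap⟩ | hlt
  · interval_cases k
    · exact absurd (hhub.nonempty_iso_bTree (by omega) (by omega) (.inl rfl) hmap) h0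
    · exact absurd (hhub.nonempty_iso_bTree (by omega) (by omega) (.inr ⟨rfl, rfl⟩) hmap) h1
    · exact absurd (hhub.nonempty_iso_bTree (by omega) (by omega) (.inl rfl) hmap) h2
  · have hcard : 5 ≤ Fintype.card (Fin (m + 1 + (m + 1))) := by
      rw [Fintype.card_fin]
      omega
    refine sLt_of_sum_excess_sq_lt hcard hXY.isTree (bTree_isTree (by omega)) ?_
    rwa [sum_excess_sq_bTree (by omega) (by omega) (.inl rfl)]
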